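/- Let A be a finite alphabet, q > 0 with q ≠ 1, and let P = (p_i), Q = (q_i) be probability distributions on A with q_i > 0 for all i. Then the Csiszár complexity Φ^C(P,Q) = (1/(1−q))·Σ_i p_i^q·(1 − q_i^{1−q}) satisfies Φ^C(P,Q) ≥ S_q(P), with equality if and only if P = Q. Hence Tsallis entropy S_q also arises as minimal Csiszár complexity: inf_Q Φ^C(P,Q) = Φ^C(P,P) = S_q(P). -/

import Mathlib

open Finset

/-!
Weighted AM-GM gives `p ^ q * r ^ (1 - q) ≤ q * p + (1 - q) * r` for `0 < q < 1`, and Bernoulli's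
inequality reverses it for `1 < q`; both are strict unless `p = r`. Divided by `1 - q`, the deficit
is therefore nonnegative for every `q > 0`, and vanishes only at `p = r`. Between two probability
distributions the linear terms cancel in the sum, and what remains is the Tsallis relative entropy,
which is exactly the excess of the Csiszár complexity over the Tsallis entropy. If the second
argument has mass `m < 1` instead, this excess is the sum of the deficits plus `1 - m`.
-/

section Pointwise

variable {q p r : ℝ}

theorem mul_add_one_sub_mul_lt_rpow_mul_rpow (hq : 1 < q) (hp : 0 ≤ p) (hr : 0 < r)
    (hpr : p ≠ r) :
    q * p + (1 - q) * r < p ^ q * r ^ (1 - q) := by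
  have hs : -1 ≤ p / r - 1 := by linarith [div_nonneg hp hr.le]
  have hs0 : p / r - 1 ≠ 0 := sub_ne_zero.2 fun h ↦ hpr ((div_eq_one_iff_eq hr.ne').1 h)
  calc
    q * p + (1 - q) * r = r * (1 + q * (p / r - 1)) := by field_simp; ring
    _ < r * (1 + (p / r - 1)) ^ q :=
      mul_lt_mul_of_pos_left (one_add_mul_self_lt_rpow_one_add hs hs0 hq) hr
    _ = p ^ q * r ^ (1 - q) := by
      rw [add_sub_cancel, Real.div_rpow hp hr.le, Real.rpow_sub hr, Real.rpow_one]
      ring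

theorem rpow_mul_rpow_one_sub_self (hp : 0 ≤ p) : p ^ q * p ^ (1 - q) = p := by
  rw [← Real.rpow_of_add_eq hp one_ne_zero (add_sub_cancel q 1), Real.rpow_one]

/-- The summand of the Tsallis relative entropy `(1 - ∑ p_i ^ q * r_i ^ (1 - q)) / (1 - q)`,
corrected by linear terms that cancel between probability distributions and make every summand
nonnegative. At `q = 1` it has the junk value `0`. -/
noncomputable def tsallisDivFun (q p r : ℝ) : ℝ :=
  (q * p + (1 - q) * r - p ^ q * r ^ (1 - q)) / (1 - q)

theorem tsallisDivFun_self (hp : 0 ≤ p) : tsallisDivFun q p p = 0 := by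
  rw [tsallisDivFun, rpow_mul_rpow_one_sub_self hp]
  ring

theorem tsallisDivFun_pos (hq0 : 0 < q) (hq1 : q ≠ 1) (hp : 0 ≤ p) (hr : 0 ≤ r)
    (hr' : 1 < q → 0 < r) (hpr : p ≠ r) : 0 < tsallisDivFun q p r := by
  rcases hq1.lt_or_gt with hq | hq
  · have amgm : p ^ q * r ^ (1 - q) < q * p + (1 - q) * r :=
      (Real.geom_mean_lt_arith_mean2_weighted_iff_of_pos hq0 (sub_pos.2 hq) hp hr
        (add_sub_cancel q 1)).2 hpr
    exact div_pos (sub_pos.2 amgm) (sub_pos.2 hq)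
  · exact div_pos_of_neg_of_neg
      (sub_neg.2 (mul_add_one_sub_mul_lt_rpow_mul_rpow hq hp (hr' hq) hpr)) (sub_neg.2 hq)

theorem tsallisDivFun_nonneg (hq0 : 0 < q) (hq1 : q ≠ 1) (hp : 0 ≤ p) (hr : 0 ≤ r)
    (hr' : 1 < q → 0 < r) : 0 ≤ tsallisDivFun q p r := by
  rcases eq_or_ne p r with rfl | hpr
  · exact (tsallisDivFun_self hp).ge
  · exact (tsallisDivFun_pos hq0 hq1 hp hr hr' hpr).le

theorem tsallisDivFun_eq_zero_iff (hq0 : 0 < q) (hq1 : q ≠ 1) (hp : 0 ≤ p) (hr : 0 ≤ r)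
    (hr' : 1 < q → 0 < r) : tsallisDivFun q p r = 0 ↔ p = r := by
  refine ⟨fun h ↦ ?_, ?_⟩
  · by_contra hpr
    exact (tsallisDivFun_pos hq0 hq1 hp hr hr' hpr).ne' h
  · rintro rfl
    exact tsallisDivFun_self hp

end Pointwise

section Distributions

variable {A : Type*} {q m : ℝ} {P Q : A → ℝ}

/-- The Tsallis entropy `S_q(P)` of a distribution on a possibly infinite alphabet. It has junk
values at `q = 1` and where `∑ P i ^ q` diverges. -/
noncomputable def tsallisEntropy (q : ℝ) (P : A → ℝ) : ℝ :=
  (1 - ∑' i, P i ^ q) / (q - 1)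

/-- The Csiszár complexity `Φ^C(P, Q)` of distributions on a possibly infinite alphabet. It has junk
values at `q = 1` and where the series diverges. -/
noncomputable def csiszarComplexity (q : ℝ) (P Q : A → ℝ) : ℝ :=
  1 / (1 - q) * ∑' i, P i ^ q * (1 - Q i ^ (1 - q))

theorem summable_rpow_of_one_le (hq : 1 ≤ q) (hP0 : ∀ i, 0 ≤ P i) (hP : Summable P) :
    Summable fun i ↦ P i ^ q := by
  refine Summable.of_norm_bounded_eventually hP ?_
  filter_upwards [hP.tendsto_cofinite_zero.eventually_le_const one_pos] with i hi
  rw [Real.norm_of_nonneg (Real.rpow_nonneg (hP0 i) q)]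
  exact Real.rpow_le_self_of_le_one (hP0 i) hi hq

theorem summable_rpow_mul_rpow_one_sub (hq0 : 0 ≤ q) (hq1 : q ≤ 1) (hP0 : ∀ i, 0 ≤ P i)
    (hQ0 : ∀ i, 0 ≤ Q i) (hP : Summable P) (hQ : Summable Q) :
    Summable fun i ↦ P i ^ q * Q i ^ (1 - q) :=
  Summable.of_nonneg_of_le
    (fun i ↦ mul_nonneg (Real.rpow_nonneg (hP0 i) _) (Real.rpow_nonneg (hQ0 i) _))
    (fun i ↦ Real.geom_mean_le_arith_mean2_weighted hq0 (sub_nonneg.2 hq1) (hP0 i) (hQ0 i)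
      (add_sub_cancel q 1))
    ((hP.mul_left q).add (hQ.mul_left (1 - q)))

theorem summable_rpow_and_summable_rpow_mul_rpow_one_sub (hq0 : 0 ≤ q) (hP0 : ∀ i, 0 ≤ P i)
    (hQ0 : ∀ i, 0 ≤ Q i) (hP : Summable P) (hQ : Summable Q)
    (hΦ : Summable fun i ↦ P i ^ q * (1 - Q i ^ (1 - q))) :
    (Summable fun i ↦ P i ^ q) ∧ Summable fun i ↦ P i ^ q * Q i ^ (1 - q) := by
  rcases le_total q 1 with hq1 | hq1
  · have hPQ := summable_rpow_mul_rpow_one_sub hq0 hq1 hP0 hQ0 hP hQ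
    exact ⟨(hΦ.add hPQ).congr fun i ↦ by ring, hPQ⟩
  · have hPq := summable_rpow_of_one_le hq1 hP0 hP
    exact ⟨hPq, (hPq.sub hΦ).congr fun i ↦ by ring⟩

theorem csiszarComplexity_sub_tsallisEntropy (hPq : Summable fun i ↦ P i ^ q)
    (hPQ : Summable fun i ↦ P i ^ q * Q i ^ (1 - q)) :
    csiszarComplexity q P Q - tsallisEntropy q P =
      (1 - ∑' i, P i ^ q * Q i ^ (1 - q)) / (1 - q) := by
  simp only [csiszarComplexity, tsallisEntropy, mul_sub, mul_one]
  rw [hPq.tsum_sub hPQ, ← neg_sub 1 q, div_neg]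
  ring

theorem hasSum_tsallisDivFun (hq1 : q ≠ 1) (hP : HasSum P 1) (hQ : HasSum Q m)
    (hPq : Summable fun i ↦ P i ^ q) (hPQ : Summable fun i ↦ P i ^ q * Q i ^ (1 - q)) :
    HasSum (fun i ↦ tsallisDivFun q (P i) (Q i))
      (csiszarComplexity q P Q - tsallisEntropy q P - (1 - m)) := by
  have hq : 1 - q ≠ 0 := sub_ne_zero.2 hq1.symm
  have excess_eq : csiszarComplexity q P Q - tsallisEntropy q P - (1 - m) =
      (q * 1 + (1 - q) * m - ∑' i, P i ^ q * Q i ^ (1 - q)) / (1 - q) := by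
    rw [csiszarComplexity_sub_tsallisEntropy hPq hPQ]
    field_simp
    ring
  rw [excess_eq]
  exact (((hP.mul_left q).add (hQ.mul_left (1 - q))).sub hPQ.hasSum).div_const (1 - q)

theorem csiszarComplexity_self (hq1 : q ≠ 1) (hP0 : ∀ i, 0 ≤ P i) (hP : HasSum P 1)
    (hPq : Summable fun i ↦ P i ^ q) : csiszarComplexity q P P = tsallisEntropy q P := by
  have hPP : Summable fun i ↦ P i ^ q * P i ^ (1 - q) :=
    hP.summable.congr fun i ↦ (rpow_mul_rpow_one_sub_self (hP0 i)).symm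
  have excess := hasSum_tsallisDivFun hq1 hP hP hPq hPP
  simp only [tsallisDivFun_self (hP0 _), sub_self, sub_zero] at excess
  exact sub_eq_zero.1 (excess.unique hasSum_zero)

theorem tsallis_minimal_csiszar_complexity_general (hq0 : 0 < q) (hq1 : q ≠ 1)
    (hP0 : ∀ i, 0 ≤ P i) (hP : HasSum P 1)
    (hQ0 : ∀ i, 0 ≤ Q i) (hQ0' : 1 < q → ∀ i, 0 < Q i) (hQ : HasSum Q m) (hm : m ≤ 1)
    (hΦ : Summable fun i ↦ P i ^ q * (1 - Q i ^ (1 - q))) :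
    tsallisEntropy q P ≤ csiszarComplexity q P Q ∧
    (csiszarComplexity q P Q = tsallisEntropy q P ↔ P = Q) ∧
    csiszarComplexity q P P = tsallisEntropy q P := by
  obtain ⟨hPq, hPQ⟩ := summable_rpow_and_summable_rpow_mul_rpow_one_sub hq0.le hP0 hQ0
    hP.summable hQ.summable hΦ
  have excess := hasSum_tsallisDivFun hq1 hP hQ hPq hPQ
  have nonneg (i : A) : 0 ≤ tsallisDivFun q (P i) (Q i) :=
    tsallisDivFun_nonneg hq0 hq1 (hP0 i) (hQ0 i) (hQ0' · i)
  have self := csiszarComplexity_self hq1 hP0 hP hPq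
  have excess_nonneg := excess.nonneg nonneg
  refine ⟨by linarith, ⟨fun h ↦ ?_, fun h ↦ h ▸ self⟩, self⟩
  have excess_zero : csiszarComplexity q P Q - tsallisEntropy q P - (1 - m) = 0 := by linarith
  have divFun_zero := (hasSum_zero_iff_of_nonneg nonneg).1 (excess_zero ▸ excess)
  funext i
  exact (tsallisDivFun_eq_zero_iff hq0 hq1 (hP0 i) (hQ0 i) (hQ0' · i)).1 (congrFun divFun_zero i)

end Distributions

/-- **Tsallis entropy as minimal Csiszár complexity.**
Let `A` be a finite alphabet, `q > 0`, `q ≠ 1`, and let `P, Q` be probability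
distributions on `A` with `q_i > 0` for all `i`.  Then the Csiszár complexity
`Φ^C(P,Q) = (1/(1-q)) Σ_i p_i^q (1 - q_i^(1-q))` satisfies `Φ^C(P,Q) ≥ S_q(P)`,
with equality iff `P = Q`, and `Φ^C(P,P) = S_q(P)`, where
`S_q(P) = (1 - Σ_i p_i^q)/(q-1)` is the Tsallis entropy. -/
theorem tsallis_minimal_csiszar_complexity {A : Type*} [Fintype A]
    (q : ℝ) (hq0 : 0 < q) (hq1 : q ≠ 1)
    (P Q : A → ℝ)
    (hP0 : ∀ i, 0 ≤ P i) (hP1 : ∑ i, P i = 1)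
    (hQ0 : ∀ i, 0 < Q i) (hQ1 : ∑ i, Q i = 1) :
    (1 - ∑ i, P i ^ q) / (q - 1)
        ≤ 1 / (1 - q) * ∑ i, P i ^ q * (1 - Q i ^ (1 - q)) ∧
    (1 / (1 - q) * ∑ i, P i ^ q * (1 - Q i ^ (1 - q))
        = (1 - ∑ i, P i ^ q) / (q - 1) ↔ P = Q) ∧
    1 / (1 - q) * ∑ i, P i ^ q * (1 - P i ^ (1 - q))
        = (1 - ∑ i, P i ^ q) / (q - 1) := by
  simpa only [tsallisEntropy, csiszarComplexity, tsum_fintype] using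
    tsallis_minimal_csiszar_complexity_general hq0 hq1 hP0 (hP1 ▸ hasSum_fintype P)
      (fun i ↦ (hQ0 i).le) (fun _ ↦ hQ0) (hQ1 ▸ hasSum_fintype Q) le_rfl (hasSum_fintype _).summable
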